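/- arXiv:math/0603129 — 5 statements merged into one kernel-verified Lean document; each statement's English description precedes it below -/
import Mathlib

section
/- Let τ ∈ Z[λ] be a nonzero nonunit such that 4 divides τ but 16 does not divide τ. Then G_0(τ) is a normal subgroup of G_0(τ/2) and the quotient group G_0(τ/2)/G_0(τ) is isomorphic to ℤ/2ℤ × ℤ/2ℤ. -/
/-!
Put `σ = τ/2`, so `2 ∣ σ`. Send `[[a, b], [σk, d]] ∈ G₀(σ)` to `k mod 2` in
`ℤ[λ]/2 ≅ (ℤ/2)²`. The sign ambiguity in `PSL₂` disappears modulo 2, and the kernel is `G₀(τ)`.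
The lower left entry of a product is `σ(ka' + dk')`, so the map is multiplicative as soon as
the diagonal entries of every element of `G₀(σ)` are 1 modulo 2 (`rep_mul`).

This holds because the generators of `G₅`, hence all of `G₅`, preserve the quadratic form
`x² + λxy + y²` modulo 2 (`formOne_of_mem_G5`): if `c ≡ 0 (mod 2)` then `a² ≡ 1`, which forces
`a ≡ 1` because `2` is prime in `ℤ[λ]`, and `d ≡ 1` follows from the determinant (`diag_odd`).

For surjectivity, let `n` be the least positive integer divisible by `σ`; then `κ = n/σ` is odd
(`exists_odd_cofactor`). The conjugates of `Tⁿ` by `S` and by `STS⁻¹` lie in `G₀(σ)` and have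
lower left entries `-nλ` and `-nλ³`, hence images `κλ` and `κλ³ ≡ κ` modulo 2, and these two
elements generate `ℤ[λ]/2` additively.
-/

open Matrix

noncomputable section

/-- `λ = 2 cos(π/5) = (1+√5)/2`. -/
def lam : ℝ := 2 * Real.cos (Real.pi / 5)

/-- The ring `ℤ[λ]`, as a subring of `ℝ`. -/
def Zlam : Subring ℝ := Subring.closure {lam}

/-- `λ` as an element of `ℤ[λ]`. -/
def lamZ : Zlam := ⟨lam, Subring.subset_closure rfl⟩

/-- `SL(2,ℝ)`. -/
abbrev SL2R := Matrix.SpecialLinearGroup (Fin 2) ℝ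

/-- `PSL(2,ℝ)`, realized as `SL(2,ℝ)` modulo its center `{±1}`. -/
abbrev PSL2R := SL2R ⧸ Subgroup.center SL2R

/-- The canonical projection `SL(2,ℝ) → PSL(2,ℝ)`. -/
def toPSL : SL2R →* PSL2R := QuotientGroup.mk' (Subgroup.center SL2R)

/-- The generator `[[1, λ], [0, 1]]` of the Hecke group `G₅`. -/
def Tgen : SL2R := ⟨!![1, lam; 0, 1], by simp [Matrix.det_fin_two_of]⟩

/-- The generator `[[0, -1], [1, 0]]` of the Hecke group `G₅`. -/
def Sgen : SL2R := ⟨!![0, -1; 1, 0], by simp [Matrix.det_fin_two_of]⟩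

/-- The Hecke group `G₅ ≤ PSL(2,ℝ)`, generated by the images of
`[[1, λ], [0, 1]]` and `[[0, -1], [1, 0]]`. -/
def G5 : Subgroup PSL2R := Subgroup.closure {toPSL Tgen, toPSL Sgen}

/-- The subgroup of `SL(2,ℝ)` of matrices with entries in `ℤ[λ]` whose `(2,1)` entry is
divisible by `τ`. -/
def SL0 (τ : ℝ) : Subgroup SL2R where
  carrier := { A | (∀ i j, A.1 i j ∈ Zlam) ∧ ∃ k ∈ Zlam, A.1 1 0 = τ * k }
  one_mem' := by
    refine ⟨fun i j => ?_, 0, Zlam.zero_mem, by simp⟩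
    rcases Decidable.eq_or_ne i j with h | h <;>
      simp [Matrix.one_apply, h, Zlam.one_mem, Zlam.zero_mem]
  mul_mem' := by
    rintro A B ⟨hA, kA, hkA, hA10⟩ ⟨hB, kB, hkB, hB10⟩
    constructor
    · intro i j
      have : (A * B).1 i j = A.1 i 0 * B.1 0 j + A.1 i 1 * B.1 1 j := by
        simp [Matrix.mul_apply, Fin.sum_univ_two]
      rw [this]
      exact Zlam.add_mem (Zlam.mul_mem (hA i 0) (hB 0 j)) (Zlam.mul_mem (hA i 1) (hB 1 j))
    · refine ⟨kA * B.1 0 0 + A.1 1 1 * kB,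
        Zlam.add_mem (Zlam.mul_mem hkA (hB 0 0)) (Zlam.mul_mem (hA 1 1) hkB), ?_⟩
      have : (A * B).1 1 0 = A.1 1 0 * B.1 0 0 + A.1 1 1 * B.1 1 0 := by
        simp [Matrix.mul_apply, Fin.sum_univ_two]
      rw [this, hA10, hB10]; ring
  inv_mem' := by
    rintro A ⟨hA, kA, hkA, hA10⟩
    rw [Matrix.SpecialLinearGroup.SL2_inv_expl A]
    constructor
    · intro i j
      fin_cases i <;> fin_cases j <;>
        simp [Zlam.neg_mem, hA 0 0, hA 0 1, hA 1 0, hA 1 1]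
    · exact ⟨-kA, Zlam.neg_mem hkA, by simp [hA10]⟩

/-- The congruence subgroup `G₀(τ) ≤ G₅`: elements of `G₅` represented by a matrix with
entries in `ℤ[λ]` whose `(2,1)` entry is divisible by `τ`. -/
def G0 (τ : ℝ) : Subgroup PSL2R := G5 ⊓ (SL0 τ).map toPSL

/-- The principal congruence subgroup `G(ν)` of `G₅` (as a set): elements of `G₅`
represented by a matrix with entries in `ℤ[λ]` that is congruent to `±I` modulo `ν`. -/
def Gp (ν : ℝ) : Set PSL2R :=
  { g | g ∈ G5 ∧ ∃ A : SL2R, toPSL A = g ∧ (∀ i j, A.1 i j ∈ Zlam) ∧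
      ((∀ i j, ∃ k ∈ Zlam, A.1 i j - (1 : Matrix (Fin 2) (Fin 2) ℝ) i j = ν * k) ∨
       (∀ i j, ∃ k ∈ Zlam, A.1 i j + (1 : Matrix (Fin 2) (Fin 2) ℝ) i j = ν * k)) }

/-- `x/y` is in reduced form: `(x, y)ᵗ` is a column of a matrix representing an element
of `G₅`. -/
def IsReducedForm (x y : ℝ) : Prop :=
  ∃ A : SL2R, toPSL A ∈ G5 ∧
    ((A.1 0 0 = x ∧ A.1 1 0 = y) ∨ (A.1 0 1 = x ∧ A.1 1 1 = y))

/-- `g` is a gcd of `a` and `b` in `ℤ[λ]` (well defined up to units). -/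
def IsGCDOf (g a b : Zlam) : Prop := g ∣ a ∧ g ∣ b ∧ ∀ d : Zlam, d ∣ a → d ∣ b → d ∣ g

/-- `gcd(a, b)` is a unit in `ℤ[λ]`. -/
def CoprimeZ (a b : Zlam) : Prop := ∀ d : Zlam, d ∣ a → d ∣ b → IsUnit d

/-- `b = [τ]`: `(b)` is the largest ideal of `ℤ[λ]` with `(b²) ⊆ (τ)`. -/
def IsRadOf (τ b : Zlam) : Prop := τ ∣ b ^ 2 ∧ ∀ s : Zlam, τ ∣ s ^ 2 → b ∣ s

/-- `r ∈ ℤ[λ]` is `G₅`-elementary: whenever `x/(r·y)` is in reduced form,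
`x² ≡ 1 (mod r)`. -/
def G5Elementary (r : Zlam) : Prop :=
  ∀ x y : Zlam, IsReducedForm (x : ℝ) ((r : ℝ) * (y : ℝ)) → r ∣ (x ^ 2 - 1)

end

/-! ### Arithmetic of `ℤ[λ]` modulo 2 -/

lemma lam_eq_goldenRatio : lam = Real.goldenRatio := by
  rw [lam, Real.cos_pi_div_five, Real.goldenRatio]; ring

lemma lam_sq : lam ^ 2 = lam + 1 := by
  rw [lam_eq_goldenRatio]; exact Real.goldenRatio_sq

lemma lam_mem : lam ∈ Zlam := Subring.subset_closure rfl

@[simp, norm_cast]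
lemma coe_two_Zlam : ((2 : Zlam) : ℝ) = 2 := rfl

@[simp, norm_cast]
lemma coe_four_Zlam : ((4 : Zlam) : ℝ) = 4 := rfl

lemma mem_Zlam_iff (z : ℝ) : z ∈ Zlam ↔ ∃ x y : ℤ, z = x + y * lam := by
  constructor
  · intro h
    induction h using Subring.closure_induction with
    | mem z hz => exact ⟨0, 1, by simp [Set.mem_singleton_iff.1 hz]⟩
    | zero => exact ⟨0, 0, by simp⟩
    | one => exact ⟨1, 0, by simp⟩
    | add u v _ _ hu hv =>
      obtain ⟨x, y, rfl⟩ := hu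
      obtain ⟨x', y', rfl⟩ := hv
      exact ⟨x + x', y + y', by push_cast; ring⟩
    | neg u _ hu =>
      obtain ⟨x, y, rfl⟩ := hu
      exact ⟨-x, -y, by push_cast; ring⟩
    | mul u v _ _ hu hv =>
      obtain ⟨x, y, rfl⟩ := hu
      obtain ⟨x', y', rfl⟩ := hv
      refine ⟨x * x' + y * y', x * y' + y * x' + y * y', ?_⟩
      push_cast
      linear_combination (y * y' : ℝ) * lam_sq
  · rintro ⟨x, y, rfl⟩
    exact Zlam.add_mem (intCast_mem Zlam x) (Zlam.mul_mem (intCast_mem Zlam y) lam_mem)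

lemma coords_unique {x y x' y' : ℤ} (h : (x + y * lam : ℝ) = x' + y' * lam) :
    x = x' ∧ y = y' := by
  have hy : y = y' := by
    by_contra hne
    have hirr := Real.goldenRatio_irrational
    rw [← lam_eq_goldenRatio] at hirr
    have h0 : (y - y' : ℝ) ≠ 0 := sub_ne_zero.2 (by exact_mod_cast hne)
    refine hirr ⟨((x' - x : ℤ) : ℚ) / ((y - y' : ℤ) : ℚ), ?_⟩
    push_cast
    rw [div_eq_iff h0]
    linarith
  subst hy
  exact ⟨by exact_mod_cast add_right_cancel h, rfl⟩

/-- The integers `x, y` with `z = x + yλ`. -/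
noncomputable def coords (z : Zlam) : ℤ × ℤ :=
  (((mem_Zlam_iff z).1 z.2).choose, ((mem_Zlam_iff z).1 z.2).choose_spec.choose)

lemma coords_eq (z : Zlam) {x y : ℤ} (h : (z : ℝ) = x + y * lam) : coords z = (x, y) := by
  have h' : (z : ℝ) = (coords z).1 + (coords z).2 * lam :=
    ((mem_Zlam_iff z).1 z.2).choose_spec.choose_spec
  have := coords_unique (h'.symm.trans h)
  exact Prod.ext this.1 this.2

/-- Reduction modulo 2 on `ℤ[λ]`, as an additive map: `x + yλ ↦ (x mod 2, y mod 2)`. -/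
noncomputable def rho : Zlam →+ ZMod 2 × ZMod 2 where
  toFun z := ((coords z).1, (coords z).2)
  map_zero' := by
    rw [coords_eq 0 (x := 0) (y := 0) (by simp)]
    simp
  map_add' u v := by
    obtain ⟨x, y, hu⟩ := (mem_Zlam_iff u).1 u.2
    obtain ⟨x', y', hv⟩ := (mem_Zlam_iff v).1 v.2
    rw [coords_eq u hu, coords_eq v hv, coords_eq (u + v) (x := x + x') (y := y + y')
      (by push_cast; rw [hu, hv]; ring)]
    simp

lemma rho_eq (z : Zlam) {x y : ℤ} (h : (z : ℝ) = x + y * lam) :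
    rho z = ((x : ZMod 2), (y : ZMod 2)) := by
  change (((coords z).1 : ZMod 2), ((coords z).2 : ZMod 2)) = _
  rw [coords_eq z h]

lemma rho_two_mul (z : Zlam) : rho (2 * z) = 0 := by
  rw [two_mul, map_add]
  exact CharTwo.add_self_eq_zero _

lemma rho_eq_zero_iff (z : Zlam) : rho z = 0 ↔ ∃ w, z = 2 * w := by
  constructor
  · intro h
    obtain ⟨x, y, hz⟩ := (mem_Zlam_iff z).1 z.2
    rw [rho_eq z hz, Prod.mk_eq_zero, ZMod.intCast_zmod_eq_zero_iff_dvd,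
      ZMod.intCast_zmod_eq_zero_iff_dvd] at h
    obtain ⟨⟨x', rfl⟩, ⟨y', rfl⟩⟩ := h
    refine ⟨⟨_, (mem_Zlam_iff _).2 ⟨x', y', rfl⟩⟩, ?_⟩
    ext
    rw [hz]; push_cast; ring
  · rintro ⟨w, rfl⟩
    exact rho_two_mul w

lemma rho_neg (z : Zlam) : rho (-z) = rho z := by
  rw [map_neg]
  exact CharTwo.neg_eq _

/-- In `ℤ[λ]/2 ≅ 𝔽₄` the only square root of 1 is 1. -/
lemma odd_of_sq (a k : Zlam) (h : a ^ 2 - 1 = 2 * k) : ∃ p, a = 1 + 2 * p := by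
  obtain ⟨x, y, ha⟩ := (mem_Zlam_iff a).1 a.2
  obtain ⟨u, v, hk⟩ := (mem_Zlam_iff k).1 k.2
  have h' : (a : ℝ) ^ 2 - 1 = 2 * k := by exact_mod_cast congrArg (Subtype.val) h
  rw [ha, hk] at h'
  have hc := coords_unique (x := x ^ 2 + y ^ 2 - 1) (y := 2 * x * y + y ^ 2)
    (x' := 2 * u) (y' := 2 * v) (by
      push_cast
      linear_combination h' - (y : ℝ) ^ 2 * lam_sq)
  have hy : Even y := by
    have : Even (y ^ 2) := ⟨v - x * y, by linarith [hc.2]⟩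
    exact (Int.even_pow.1 this).1
  obtain ⟨y', rfl⟩ := hy
  have hx : Odd x := by
    have : Odd (x ^ 2) := ⟨u - 2 * y' ^ 2, by linarith [hc.1]⟩
    exact (Int.odd_pow.1 this).resolve_right (by norm_num)
  obtain ⟨x', rfl⟩ := hx
  refine ⟨⟨_, (mem_Zlam_iff _).2 ⟨x', y', rfl⟩⟩, ?_⟩
  ext
  push_cast
  rw [ha]; push_cast; ring

/-! ### The image of `G₅` modulo 2 -/

lemma mul_entry (A B : SL2R) (i j : Fin 2) :
    (A * B).1 i j = A.1 i 0 * B.1 0 j + A.1 i 1 * B.1 1 j := by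
  rw [Matrix.SpecialLinearGroup.coe_mul, Matrix.mul_apply, Fin.sum_univ_two]

lemma Tgen_coe : Tgen.1 = !![1, lam; 0, 1] := rfl

lemma Sgen_coe : Sgen.1 = !![0, -1; 1, 0] := rfl

lemma Tgen_inv : Tgen⁻¹.1 = !![1, -lam; 0, 1] := by
  rw [Matrix.SpecialLinearGroup.SL2_inv_expl]; simp [Tgen]; rfl

lemma Sgen_inv : Sgen⁻¹.1 = !![0, 1; -1, 0] := by
  rw [Matrix.SpecialLinearGroup.SL2_inv_expl]; simp [Sgen]; rfl

lemma eq_or_neg_of_toPSL_eq {A B : SL2R} (h : toPSL A = toPSL B) :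
    ∃ ε : ℝ, (ε = 1 ∨ ε = -1) ∧ ∀ i j, B.1 i j = ε * A.1 i j := by
  have h1 : A⁻¹ * B ∈ Subgroup.center SL2R := QuotientGroup.eq.1 h
  obtain ⟨r, hr, hs⟩ := Matrix.SpecialLinearGroup.mem_center_iff.1 h1
  refine ⟨r, by simpa using hr, fun i j => ?_⟩
  · have hB : B.1 = A.1 * (A⁻¹ * B).1 := by
      rw [← Matrix.SpecialLinearGroup.coe_mul, mul_inv_cancel_left]
    rw [hB, ← hs]
    simp [mul_comm]

/-- The first column `(a, c)` of `A` takes the value 1 modulo 2 under the quadratic form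
`x² + λxy + y²`. -/
def FormOne (A : SL2R) : Prop :=
  ∃ a c k : Zlam, A.1 0 0 = a ∧ A.1 1 0 = c ∧ a ^ 2 + lamZ * a * c + c ^ 2 - 1 = 2 * k

/-- `G₅` preserves the quadratic form `x² + λxy + y²` modulo 2, as both of its generators do. -/
lemma formOne_of_mem_G5 {g : PSL2R} (hg : g ∈ G5) : ∀ A : SL2R, toPSL A = g → FormOne A := by
  -- Invariance of `FormOne` under left multiplication by `T`, `T⁻¹`, `S` and `S⁻¹`.
  have hT (A : SL2R) (h : FormOne A) : FormOne (Tgen * A) := by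
    obtain ⟨a, c, k, ha, hc, hk⟩ := h
    refine ⟨a + lamZ * c, c, k + lamZ * a * c + lamZ ^ 2 * c ^ 2, ?_, ?_, ?_⟩
    · simp only [mul_entry, Tgen_coe]; simp [ha, hc, lamZ]
    · simp only [mul_entry, Tgen_coe]; simp [hc]
    · linear_combination hk
  have hT' (A : SL2R) (h : FormOne A) : FormOne (Tgen⁻¹ * A) := by
    obtain ⟨a, c, k, ha, hc, hk⟩ := h
    refine ⟨a - lamZ * c, c, k - lamZ * a * c, ?_, ?_, ?_⟩
    · simp only [mul_entry, Tgen_inv]; simp [ha, hc, lamZ]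
      ring
    · simp only [mul_entry, Tgen_inv]; simp [hc]
    · linear_combination hk
  have hS (A : SL2R) (h : FormOne A) : FormOne (Sgen * A) := by
    obtain ⟨a, c, k, ha, hc, hk⟩ := h
    refine ⟨-c, a, k - lamZ * a * c, ?_, ?_, ?_⟩
    · simp only [mul_entry, Sgen_coe]; simp [hc]
    · simp only [mul_entry, Sgen_coe]; simp [ha]
    · linear_combination hk
  have hS' (A : SL2R) (h : FormOne A) : FormOne (Sgen⁻¹ * A) := by
    obtain ⟨a, c, k, ha, hc, hk⟩ := h
    refine ⟨c, -a, k - lamZ * a * c, ?_, ?_, ?_⟩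
    · simp only [mul_entry, Sgen_inv]; simp [hc]
    · simp only [mul_entry, Sgen_inv]; simp [ha]
    · linear_combination hk
  induction hg using Subgroup.closure_induction_left with
  | one =>
    intro A hA
    obtain ⟨ε, hε, h⟩ := eq_or_neg_of_toPSL_eq (A := 1) (B := A) (by rw [hA, map_one])
    rcases hε with rfl | rfl
    · exact ⟨1, 0, 0, by rw [h]; simp, by rw [h]; simp, by ring⟩
    · exact ⟨-1, 0, 0, by rw [h]; simp, by rw [h]; simp, by ring⟩
  | mul_left x hx y hy ih =>
    intro A hA
    rcases hx with rfl | rfl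
    · simpa using hT _ (ih (Tgen⁻¹ * A) (by rw [map_mul, hA, map_inv, inv_mul_cancel_left]))
    · simpa using hS _ (ih (Sgen⁻¹ * A) (by rw [map_mul, hA, map_inv, inv_mul_cancel_left]))
  | inv_mul_cancel x hx y hy ih =>
    intro A hA
    rcases hx with rfl | rfl
    · simpa using hT' _ (ih (Tgen * A) (by rw [map_mul, hA, mul_inv_cancel_left]))
    · simpa using hS' _ (ih (Sgen * A) (by rw [map_mul, hA, mul_inv_cancel_left]))

/-- A matrix in `G₅` that is upper triangular modulo 2 is unipotent modulo 2. -/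
lemma diag_odd {A : SL2R} (hA : toPSL A ∈ G5) (hint : ∀ i j, A.1 i j ∈ Zlam) (m : Zlam)
    (hm : A.1 1 0 = 2 * m) :
    ∃ p q : Zlam, A.1 0 0 = 1 + 2 * p ∧ A.1 1 1 = 1 + 2 * q := by
  obtain ⟨a, c, k, ha, hc, hk⟩ := formOne_of_mem_G5 hA A rfl
  have hcm : c = 2 * m := by
    ext; push_cast; rw [← hc, hm]
  subst hcm
  obtain ⟨p, hp⟩ := odd_of_sq a (k - lamZ * a * m - 2 * m ^ 2) (by linear_combination hk)
  have hdet : A.1 0 0 * A.1 1 1 - A.1 0 1 * A.1 1 0 = 1 := by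
    rw [← Matrix.det_fin_two]; exact A.2
  have hpa : A.1 0 0 = 1 + 2 * p := by rw [ha, hp]; push_cast; rfl
  refine ⟨p, ⟨A.1 0 1, hint 0 1⟩ * m - p * ⟨A.1 1 1, hint 1 1⟩, hpa, ?_⟩
  push_cast
  rw [hpa, hm] at hdet
  linear_combination hdet

/-! ### The homomorphism to `ℤ[λ]/2` -/

/-- `A` is a matrix over `ℤ[λ]` that represents `g` and has lower left entry `σk`. -/
def LowerRep (σ : ℝ) (g : PSL2R) (A : SL2R) (k : Zlam) : Prop :=
  toPSL A = g ∧ (∀ i j, A.1 i j ∈ Zlam) ∧ A.1 1 0 = σ * k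

lemma exists_rep {σ : ℝ} {g : PSL2R} (hg : g ∈ G0 σ) : ∃ p : SL2R × Zlam, LowerRep σ g p.1 p.2 := by
  obtain ⟨-, A, ⟨hint, k, hk, h10⟩, hA⟩ := hg
  exact ⟨(A, ⟨k, hk⟩), hA, hint, h10⟩

lemma mem_G0_of_rep {σ : ℝ} {g : PSL2R} {A : SL2R} {k : Zlam} (h5 : g ∈ G5) (h : LowerRep σ g A k) :
    g ∈ G0 σ :=
  ⟨h5, A, ⟨h.2.1, k, k.2, h.2.2⟩, h.1⟩

lemma rep_unique {σ : ℝ} (hσ : σ ≠ 0) {g : PSL2R} {A B : SL2R} {k l : Zlam}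
    (hA : LowerRep σ g A k) (hB : LowerRep σ g B l) : rho k = rho l := by
  obtain ⟨ε, hε, h⟩ := eq_or_neg_of_toPSL_eq (hA.1.trans hB.1.symm)
  have h10 := h 1 0
  rw [hA.2.2, hB.2.2] at h10
  have hl : (l : ℝ) = ε * k := mul_left_cancel₀ hσ (by rw [h10]; ring)
  rcases hε with rfl | rfl
  · have : l = k := Subtype.ext (by rw [hl]; simp)
    rw [this]
  · have : l = -k := Subtype.ext (by rw [hl]; simp)
    rw [this, rho_neg]

/-- For even `σ`, the diagonal entries are 1 modulo 2, so the lower left entry divided by `σ`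
is additive modulo 2. -/
lemma rep_mul {σ : ℝ} (u : Zlam) (hσ : σ = 2 * u) {g h : PSL2R} {A B : SL2R} {k l : Zlam}
    (hg : g ∈ G5) (hh : h ∈ G5) (hA : LowerRep σ g A k) (hB : LowerRep σ h B l) :
    ∃ m : Zlam, LowerRep σ (g * h) (A * B) m ∧ rho m = rho k + rho l := by
  obtain ⟨-, q, -, hq⟩ := diag_odd (A := A) (by rw [hA.1]; exact hg) hA.2.1 (u * k)
    (by rw [hA.2.2, hσ]; push_cast; ring)
  obtain ⟨p, -, hp, -⟩ := diag_odd (A := B) (by rw [hB.1]; exact hh) hB.2.1 (u * l)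
    (by rw [hB.2.2, hσ]; push_cast; ring)
  refine ⟨k + l + 2 * (k * p + q * l), ⟨by rw [map_mul, hA.1, hB.1], ?_, ?_⟩, ?_⟩
  · intro i j
    rw [mul_entry]
    exact Zlam.add_mem (Zlam.mul_mem (hA.2.1 _ _) (hB.2.1 _ _))
      (Zlam.mul_mem (hA.2.1 _ _) (hB.2.1 _ _))
  · rw [mul_entry, hA.2.2, hB.2.2,
      hp, hq]
    push_cast
    ring
  · rw [map_add, map_add, rho_two_mul, add_zero]

/-- The homomorphism `G₀(σ) → ℤ[λ]/2`, `[[a, b], [σk, d]] ↦ k mod 2`, for `σ = 2u ≠ 0`. -/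
noncomputable def phi (σ : ℝ) (hσ0 : σ ≠ 0) (u : Zlam) (hσ : σ = 2 * u) :
    G0 σ →* Multiplicative (ZMod 2 × ZMod 2) :=
  MonoidHom.mk' (fun g => Multiplicative.ofAdd (rho (exists_rep g.2).choose.2)) <| by
    intro g h
    obtain ⟨m, hm, hr⟩ := rep_mul u hσ g.2.1 h.2.1 (exists_rep g.2).choose_spec
      (exists_rep h.2).choose_spec
    rw [← ofAdd_add, ← hr]
    exact congrArg _ (rep_unique hσ0 (exists_rep (g * h).2).choose_spec hm)

lemma phi_eq {σ : ℝ} (hσ0 : σ ≠ 0) (u : Zlam) (hσ : σ = 2 * u) (g : G0 σ) {A : SL2R} {k : Zlam}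
    (h : LowerRep σ g A k) : phi σ hσ0 u hσ g = Multiplicative.ofAdd (rho k) :=
  congrArg Multiplicative.ofAdd (rep_unique hσ0 (exists_rep g.2).choose_spec h)

/-! ### Surjectivity -/

lemma Tgen_pow (n : ℕ) : (Tgen ^ n).1 = !![1, n * lam; 0, 1] := by
  induction n with
  | zero => ext i j; fin_cases i <;> fin_cases j <;> simp
  | succ n ih =>
    rw [pow_succ, Matrix.SpecialLinearGroup.coe_mul, ih]
    ext i j
    fin_cases i <;> fin_cases j <;> simp [Tgen, Matrix.mul_apply, Fin.sum_univ_two]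
    ring

lemma toPSL_Tgen_mem : toPSL Tgen ∈ G5 := Subgroup.subset_closure (by simp)

lemma toPSL_Sgen_mem : toPSL Sgen ∈ G5 := Subgroup.subset_closure (by simp)

lemma mem_G5_and_integral {A : SL2R} (hA : A ∈ Subgroup.closure {Tgen, Sgen}) :
    toPSL A ∈ G5 ∧ ∀ i j, A.1 i j ∈ Zlam := by
  have h1 : Subgroup.closure {Tgen, Sgen} ≤ G5.comap toPSL ⊓ SL0 1 := by
    rw [Subgroup.closure_le]
    rintro x (rfl | rfl)
    · refine ⟨toPSL_Tgen_mem, fun i j => ?_, 0, Zlam.zero_mem, by simp [Tgen]⟩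
      fin_cases i <;> fin_cases j <;> simp [Tgen, lam_mem, Zlam.one_mem, Zlam.zero_mem]
    · refine ⟨toPSL_Sgen_mem, fun i j => ?_, 1, Zlam.one_mem, by simp [Sgen]⟩
      fin_cases i <;> fin_cases j <;> simp [Sgen, Zlam.one_mem, Zlam.zero_mem, Zlam.neg_mem]
  exact ⟨(h1 hA).1, (h1 hA).2.1⟩

/-- Every nonzero `σ ∈ ℤ[λ]` has a positive integral multiple `n = σκ` with `κ` odd:
the least positive integral multiple. -/
lemma exists_odd_cofactor (σ : Zlam) (hσ : σ ≠ 0) :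
    ∃ (n : ℕ) (κ : Zlam), (n : Zlam) = σ * κ ∧ rho κ ≠ 0 := by
  classical
  have hex : ∃ n : ℕ, 0 < n ∧ σ ∣ (n : Zlam) := by
    obtain ⟨x, y, hz⟩ := (mem_Zlam_iff σ).1 σ.2
    -- The norm of `x + yλ` is `x² + xy - y² = (x + yλ)(x + y - yλ)`.
    have hnorm : ((x ^ 2 + x * y - y ^ 2 : ℤ) : Zlam)
        = σ * ⟨_, (mem_Zlam_iff _).2 ⟨x + y, -y, rfl⟩⟩ := by
      ext
      push_cast
      rw [hz]
      linear_combination (y : ℝ) ^ 2 * lam_sq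
    have hne : x ^ 2 + x * y - y ^ 2 ≠ 0 := by
      intro h0
      rw [h0, Int.cast_zero, eq_comm, mul_eq_zero] at hnorm
      have h1 := hnorm.resolve_left hσ
      have h2 : ((x + y : ℤ) + (-y : ℤ) * lam : ℝ) = (0 : ℤ) + (0 : ℤ) * lam := by
        simpa using congrArg Subtype.val h1
      obtain ⟨h3, h4⟩ := coords_unique h2
      apply hσ
      ext
      have hy : y = 0 := by linarith
      have hx : x = 0 := by linarith
      rw [hz, hx, hy]; simp
    refine ⟨(x ^ 2 + x * y - y ^ 2).natAbs, Int.natAbs_pos.2 hne, ?_⟩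
    have hd : σ ∣ ((x ^ 2 + x * y - y ^ 2 : ℤ) : Zlam) := ⟨_, hnorm⟩
    rw [← Int.cast_natCast, Int.natCast_natAbs]
    rcases abs_choice (x ^ 2 + x * y - y ^ 2) with h | h <;> rw [h]
    · exact hd
    · rw [Int.cast_neg]; exact (dvd_neg).2 hd
  obtain ⟨hpos, κ, hκ⟩ := Nat.find_spec hex
  refine ⟨_, κ, hκ, fun h0 => ?_⟩
  obtain ⟨w, rfl⟩ := (rho_eq_zero_iff κ).1 h0
  -- If `κ = 2w`, then `n` is even and `n / 2 = σw` is a smaller multiple.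
  obtain ⟨x, y, hxy⟩ := (mem_Zlam_iff (σ * w : Zlam)).1 (σ * w).2
  generalize hn : Nat.find hex = n at *
  have hr : (n : ℝ) = 2 * (σ * w : Zlam) := by
    have := congrArg Subtype.val hκ
    push_cast at this ⊢
    rw [this]; ring
  rw [hxy] at hr
  have hc := coords_unique (x := n) (y := 0) (x' := 2 * x) (y' := 2 * y)
    (by push_cast; rw [hr]; ring)
  have hy : y = 0 := by omega
  have hx : x = (n / 2 : ℕ) := by omega
  refine Nat.find_min hex (m := n / 2) (by omega) ⟨by omega, w, ?_⟩
  ext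
  rw [hxy, hx, hy, Int.cast_natCast, Int.cast_zero, zero_mul, add_zero]
  rfl

lemma span_F4 : ∀ x y : ZMod 2, (x, y) ≠ 0 → ∀ t : ZMod 2 × ZMod 2,
    t = 0 ∨ t = (y, x + y) ∨ t = (x, y) ∨ t = (y, x + y) + (x, y) := by
  decide

lemma phi_surjective (σ : Zlam) (hσ0 : (σ : ℝ) ≠ 0) (u : Zlam) (hσ : (σ : ℝ) = 2 * u) :
    Function.Surjective (phi σ hσ0 u hσ) := by
  obtain ⟨n, κ, hn, hκ⟩ := exists_odd_cofactor σ (fun h => hσ0 (by rw [h]; rfl))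
  have hn' : (n : ℝ) = σ * κ := by exact_mod_cast congrArg Subtype.val hn
  have hTm : Tgen ∈ Subgroup.closure {Tgen, Sgen} := Subgroup.subset_closure (by simp)
  have hSm : Sgen ∈ Subgroup.closure {Tgen, Sgen} := Subgroup.subset_closure (by simp)
  -- Conjugates of `Tⁿ` by `S` and `STS⁻¹`, with lower left entries `-nλ` and `-nλ³`.
  have hA := mem_G5_and_integral (A := Sgen * Tgen ^ n * Sgen⁻¹)
    (mul_mem (mul_mem hSm (pow_mem hTm n)) (inv_mem hSm))
  have hU := mul_mem (mul_mem hSm hTm) (inv_mem hSm)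
  have hB := mem_G5_and_integral
    (A := (Sgen * Tgen * Sgen⁻¹) * Tgen ^ n * (Sgen * Tgen * Sgen⁻¹)⁻¹)
    (mul_mem (mul_mem hU (pow_mem hTm n)) (inv_mem hU))
  have repA : LowerRep σ _ _ (-(κ * lamZ)) := ⟨rfl, hA.2, by
    simp only [mul_entry, Tgen_pow, Sgen_inv, Sgen_coe]
    simp [lamZ, hn']
    ring⟩
  have repB : LowerRep σ _ _ (-(κ * lamZ ^ 3)) := ⟨rfl, hB.2, by
    simp only [_root_.mul_inv_rev, inv_inv, mul_entry, Tgen_pow, Tgen_inv, Sgen_inv, Sgen_coe,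
      Tgen_coe]
    simp [lamZ, hn']
    ring⟩
  obtain ⟨x, y, hxy⟩ := (mem_Zlam_iff κ).1 κ.2
  have rA : rho (-(κ * lamZ)) = ((y : ZMod 2), (x : ZMod 2) + y) := by
    rw [rho_neg, rho_eq (κ * lamZ) (x := y) (y := x + y)]
    · push_cast; rfl
    · push_cast
      rw [hxy, lamZ]
      linear_combination (y : ℝ) * lam_sq
  have rB : rho (-(κ * lamZ ^ 3)) = ((x : ZMod 2), (y : ZMod 2)) := by
    have hl : lamZ ^ 2 = lamZ + 1 := Subtype.ext lam_sq
    have : κ * lamZ ^ 3 = κ + 2 * (κ * lamZ) := by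
      linear_combination (κ * lamZ + κ) * hl
    rw [rho_neg, this, map_add, rho_two_mul, add_zero, rho_eq κ hxy]
  have fA := phi_eq hσ0 u hσ ⟨_, mem_G0_of_rep hA.1 repA⟩ repA
  have fB := phi_eq hσ0 u hσ ⟨_, mem_G0_of_rep hB.1 repB⟩ repB
  rw [rA] at fA
  rw [rB] at fB
  rw [rho_eq κ hxy] at hκ
  intro t
  rcases span_F4 x y hκ t.toAdd with h | h | h | h
  · exact ⟨1, by rw [map_one]; exact h.symm⟩
  · exact ⟨_, fA.trans h.symm⟩
  · exact ⟨_, fB.trans h.symm⟩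
  · exact ⟨_ * _, (map_mul _ _ _).trans ((congrArg₂ _ fA fB).trans h.symm)⟩

/-- If `4 ∣ τ` but `16 ∤ τ`, then `G₀(τ) ⊴ G₀(τ/2)` and
`G₀(τ/2)/G₀(τ) ≅ ℤ/2 × ℤ/2`. -/
theorem quotient_G0_of_four_dvd (τ : Zlam) (hτ0 : τ ≠ 0) (hτu : ¬ IsUnit τ)
    (h4 : (4 : Zlam) ∣ τ) (h16 : ¬ (16 : Zlam) ∣ τ) :
    ((G0 (τ : ℝ)).subgroupOf (G0 ((τ : ℝ) / 2))).Normal ∧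
    ∃ φ : G0 ((τ : ℝ) / 2) →* Multiplicative (ZMod 2 × ZMod 2),
      Function.Surjective φ ∧ φ.ker = (G0 (τ : ℝ)).subgroupOf (G0 ((τ : ℝ) / 2)) := by
  have hnorm_of_ker : ∀ H : Subgroup (G0 ((τ : ℝ) / 2)),
      (∃ φ : G0 ((τ : ℝ) / 2) →* Multiplicative (ZMod 2 × ZMod 2),
        Function.Surjective φ ∧ φ.ker = H) → H.Normal := by
    rintro _ ⟨φ, -, rfl⟩
    infer_instance
  suffices h : _ from ⟨hnorm_of_ker _ h, h⟩
  obtain ⟨u, rfl⟩ := h4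
  have hs : ((4 * u : Zlam) : ℝ) / 2 = ((2 * u : Zlam) : ℝ) := by push_cast; ring
  have hu : (u : ℝ) ≠ 0 := fun h => hτ0 (by rw [show u = 0 from Subtype.ext h, mul_zero])
  rw [hs]
  have hσ : ((2 * u : Zlam) : ℝ) = 2 * u := by push_cast; rfl
  have hσ0 : ((2 * u : Zlam) : ℝ) ≠ 0 := by rw [hσ]; exact mul_ne_zero two_ne_zero hu
  refine ⟨phi _ hσ0 u hσ, phi_surjective _ hσ0 u hσ, ?_⟩
  ext g
  rw [MonoidHom.mem_ker, Subgroup.mem_subgroupOf]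
  constructor
  · intro h
    obtain ⟨⟨A, k⟩, hr⟩ := exists_rep g.2
    rw [phi_eq hσ0 u hσ g hr] at h
    obtain ⟨w, rfl⟩ := (rho_eq_zero_iff k).1 h
    refine mem_G0_of_rep (A := A) (k := w) g.2.1 ⟨hr.1, hr.2.1, ?_⟩
    rw [hr.2.2]
    push_cast
    ring
  · intro h
    obtain ⟨⟨A, k⟩, hr⟩ := exists_rep h
    have hr' : LowerRep ((2 * u : Zlam) : ℝ) g A (2 * k) := by
      refine ⟨hr.1, hr.2.1, ?_⟩
      rw [hr.2.2]
      push_cast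
      ring
    rw [phi_eq hσ0 u hσ g hr', rho_two_mul]
    rfl
end

section
/- Let ν ∈ Z[λ] be nonzero with gcd(3, ν) a unit, and let m ≥ 0. Then the subgroup of G_5 generated by G_0(3^m ν) together with the principal congruence subgroup G(ν) equals G_0(ν). -/
/-! The proof compares `G(ν)` with `G(3^m)`. Let `Γ ≤ SL₂(ℤ[λ])` be generated by
`T = [[1, λ], [0, 1]]` and `S = [[0, -1], [1, 0]]`, and let `M` be the product of the kernels in
`Γ` of the reductions modulo `ν` and modulo `3^m`; it is a normal subgroup of `Γ`.

* The element `3` is inert in `ℤ[λ]`, so coprimality gives a multiple `n ∈ ℤ` of `ν` (its norm)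
  with `3 ∤ n`. As `T^n ≡ 1 (mod ν)` and `T^(3^m) ≡ 1 (mod 3^m)`, Bézout yields `T ∈ M`
  (`Tz_mem_kerSup`).
* The relations `S² = -1 = (S T)⁵` show that the normal closure of `T` in `Γ` is `Γ` itself, so
  `M = Γ` (`kerSup_eq_top`).

Hence an element `A` of `G₀(ν)` factors as `A = C B` with `B ∈ G(ν)` and `C ∈ G(3^m)`. The lower
left entry of `C = A B⁻¹` is divisible by `ν` and by `3^m`, hence by `3^m ν`. -/

open Matrix

lemma lamZ_sq : lamZ ^ 2 = lamZ + 1 := Subtype.ext (by simpa [lamZ] using lam_sq)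

lemma exists_int_coords (x : Zlam) : ∃ a b : ℤ, x = a + b * lamZ := by
  obtain ⟨x, hx⟩ := x
  suffices h : ∃ a b : ℤ, x = a + b * lam by
    obtain ⟨a, b, h⟩ := h
    exact ⟨a, b, Subtype.ext (by simpa [lamZ] using h)⟩
  induction hx using Subring.closure_induction with
  | mem x hx => exact ⟨0, 1, by simpa using hx⟩
  | zero => exact ⟨0, 0, by simp⟩
  | one => exact ⟨1, 0, by simp⟩
  | add x y _ _ hx hy =>
    obtain ⟨a, b, rfl⟩ := hx
    obtain ⟨c, d, rfl⟩ := hy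
    exact ⟨a + c, b + d, by push_cast; ring⟩
  | neg x _ hx =>
    obtain ⟨a, b, rfl⟩ := hx
    exact ⟨-a, -b, by push_cast; ring⟩
  | mul x y _ _ hx hy =>
    obtain ⟨a, b, rfl⟩ := hx
    obtain ⟨c, d, rfl⟩ := hy
    exact ⟨a * c + b * d, a * d + b * c + b * d, by
      push_cast; linear_combination (b * d : ℝ) * lam_sq⟩

/-- If `3 (a + bλ) = 1`, then `x = 3a - 1` and `y = 3b` satisfy `x = -yλ`, whence
`x² + xy - y² = 0`, which is impossible modulo `3`. -/
lemma not_isUnit_three : ¬ IsUnit (3 : Zlam) := by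
  intro h
  obtain ⟨u, hu⟩ := h.exists_right_inv
  obtain ⟨a, b, rfl⟩ := exists_int_coords u
  have hz : (((3 * a - 1) ^ 2 + (3 * a - 1) * (3 * b) - (3 * b) ^ 2 : ℤ) : Zlam) = 0 := by
    push_cast
    linear_combination (3 * a - 1 + 3 * b - 3 * b * lamZ : Zlam) * hu
      + (9 * b ^ 2 : Zlam) * lamZ_sq
  have hz' : (3 * a - 1) ^ 2 + (3 * a - 1) * (3 * b) - (3 * b) ^ 2 = 0 := by
    exact_mod_cast hz
  have : (3 : ℤ) ∣ 1 :=
    ⟨-(3 * a ^ 2 - 2 * a + (3 * a - 1) * b - 3 * b ^ 2), by linarith⟩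
  omega

/-- The multiple is the norm of `ν`; since `3` is inert, it is prime to `3`. -/
lemma exists_int_multiple (ν : Zlam) (hco : CoprimeZ 3 ν) :
    ∃ n : ℤ, ν ∣ (n : Zlam) ∧ IsCoprime 3 n := by
  obtain ⟨a, b, rfl⟩ := exists_int_coords ν
  refine ⟨a ^ 2 + a * b - b ^ 2, ⟨a + b - b * lamZ, ?_⟩, ?_⟩
  · push_cast
    linear_combination (b ^ 2 : Zlam) * lamZ_sq
  · rw [Int.prime_three.coprime_iff_not_dvd]
    intro h
    have key : ∀ x y : ZMod 3, x ^ 2 + x * y - y ^ 2 = 0 → x = 0 ∧ y = 0 := by decide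
    have h' := (ZMod.intCast_zmod_eq_zero_iff_dvd _ 3).2 h
    push_cast at h'
    obtain ⟨ha, hb⟩ := key _ _ h'
    obtain ⟨c, rfl⟩ := (ZMod.intCast_zmod_eq_zero_iff_dvd a 3).1 ha
    obtain ⟨d, rfl⟩ := (ZMod.intCast_zmod_eq_zero_iff_dvd b 3).1 hb
    exact not_isUnit_three (hco 3 dvd_rfl ⟨c + d * lamZ, by push_cast; ring⟩)

/-! ### The Hecke group over `ℤ[λ]` -/

/-- `SL(2, ℤ[λ])`. -/
abbrev SL2Z := Matrix.SpecialLinearGroup (Fin 2) Zlam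

/-- `[[1, λ], [0, 1]]` over `ℤ[λ]`. -/
noncomputable def Tz : SL2Z := ⟨!![1, lamZ; 0, 1], by simp [Matrix.det_fin_two_of]⟩

/-- `[[0, -1], [1, 0]]` over `ℤ[λ]`. -/
noncomputable def Sz : SL2Z := ⟨!![0, -1; 1, 0], by simp [Matrix.det_fin_two_of]⟩

/-- The preimage of the Hecke group in `SL(2, ℤ[λ])`, as the subgroup generated by
`Tz` and `Sz`. -/
def heckeZ : Subgroup SL2Z := Subgroup.closure {Tz, Sz}

/-- The inclusion `SL(2, ℤ[λ]) → SL(2, ℝ)`. -/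
def toReal : SL2Z →* SL2R := Matrix.SpecialLinearGroup.map Zlam.subtype

lemma toReal_apply (A : SL2Z) (i j : Fin 2) : (toReal A).1 i j = (A.1 i j : ℝ) := rfl

lemma G5_eq_map : G5 = heckeZ.map (toPSL.comp toReal) := by
  have hT : toReal Tz = Tgen := by
    ext i j; rw [toReal_apply]; fin_cases i <;> fin_cases j <;> simp [Tz, Tgen, lamZ]
  have hS : toReal Sz = Sgen := by
    ext i j; rw [toReal_apply]; fin_cases i <;> fin_cases j <;> simp [Sz, Sgen]
  rw [heckeZ, MonoidHom.map_closure, Set.image_pair, MonoidHom.comp_apply, MonoidHom.comp_apply,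
    hT, hS, G5]

/-- The principal congruence subgroup of level `ν` in `SL(2, ℤ[λ])`. -/
def princ (ν : Zlam) : Subgroup SL2Z :=
  (Matrix.SpecialLinearGroup.map (n := Fin 2) (Ideal.Quotient.mk (Ideal.span {ν}))).ker

instance (ν : Zlam) : (princ ν).Normal := MonoidHom.normal_ker _

lemma mem_princ {ν : Zlam} {A : SL2Z} :
    A ∈ princ ν ↔ ∀ i j, ν ∣ A.1 i j - (1 : Matrix (Fin 2) (Fin 2) Zlam) i j := by
  rw [princ, MonoidHom.mem_ker, Matrix.SpecialLinearGroup.ext_iff]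
  refine forall₂_congr fun i j => ?_
  rw [← Ideal.mem_span_singleton, ← Ideal.Quotient.eq]
  have : (1 : Matrix.SpecialLinearGroup (Fin 2) (Zlam ⧸ Ideal.span {ν})).1 i j =
      Ideal.Quotient.mk (Ideal.span {ν}) ((1 : Matrix (Fin 2) (Fin 2) Zlam) i j) := by
    fin_cases i <;> fin_cases j <;> simp
  rw [this]
  rfl

lemma Tz_pow (n : ℕ) : (Tz ^ n).1 = !![1, (n : Zlam) * lamZ; 0, 1] := by
  induction n with
  | zero => ext i j; fin_cases i <;> fin_cases j <;> simp
  | succ n ih =>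
    rw [pow_succ, Matrix.SpecialLinearGroup.coe_mul, ih, Tz]
    simp
    ring

lemma Tz_pow_mem_princ {ν : Zlam} {n : ℕ} (h : ν ∣ (n : Zlam)) : Tz ^ n ∈ princ ν := by
  rw [mem_princ, Tz_pow]
  intro i j
  fin_cases i <;> fin_cases j <;> simp [h.mul_right]

lemma Tz_zpow_mem_princ {ν : Zlam} {n : ℤ} (h : ν ∣ (n : Zlam)) : Tz ^ n ∈ princ ν := by
  obtain ⟨k, rfl | rfl⟩ := n.eq_nat_or_neg
  · rw [zpow_natCast]
    exact Tz_pow_mem_princ (by simpa using h)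
  · rw [_root_.zpow_neg, zpow_natCast]
    exact inv_mem (Tz_pow_mem_princ (by simpa using h))

lemma Sz_sq : Sz ^ 2 = -1 := by
  apply Subtype.ext
  change (Sz ^ 2).1 = (-1 : SL2Z).1
  rw [Matrix.SpecialLinearGroup.coe_pow, Matrix.SpecialLinearGroup.coe_neg,
    Matrix.SpecialLinearGroup.coe_one, Matrix.one_fin_two, pow_two]
  change !![0, -1; 1, 0] * !![0, -1; 1, 0] = _
  rw [Matrix.mul_fin_two]
  simp

lemma matrix_pow_five {R : Type*} [CommRing R] {x : R} (h : x ^ 2 = x + 1) :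
    (!![0, -1; 1, x] : Matrix (Fin 2) (Fin 2) R) ^ 5 = -1 := by
  have h2 : (!![0, -1; 1, x] : Matrix (Fin 2) (Fin 2) R) ^ 2 = !![-1, -x; x, x] := by
    rw [pow_two, Matrix.mul_fin_two]
    ext i j; fin_cases i <;> fin_cases j <;> simp
    linear_combination h
  have h4 : (!![0, -1; 1, x] : Matrix (Fin 2) (Fin 2) R) ^ 4 = !![-x, -1; 1, 0] := by
    rw [show 4 = 2 * 2 from rfl, pow_mul, h2, pow_two, Matrix.mul_fin_two]
    ext i j; fin_cases i <;> fin_cases j <;> simp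
    · linear_combination -h
    · linear_combination -h
    · linear_combination h
  rw [pow_succ, h4, Matrix.mul_fin_two]
  ext i j; fin_cases i <;> fin_cases j <;> simp

/-- `S T` has trace `λ = 2 cos (π/5)`, so its eigenvalues are primitive tenth roots of unity
`exp (± π i / 5)`. -/
lemma Sz_mul_Tz_pow_five : (Sz * Tz) ^ 5 = -1 := by
  have h1 : (Sz * Tz).1 = !![0, -1; 1, lamZ] := by
    change !![0, -1; 1, 0] * !![1, lamZ; 0, 1] = _
    rw [Matrix.mul_fin_two]
    simp
  apply Subtype.ext
  change ((Sz * Tz) ^ 5).1 = (-1 : SL2Z).1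
  rw [Matrix.SpecialLinearGroup.coe_pow, h1, Matrix.SpecialLinearGroup.coe_neg]
  exact matrix_pow_five lamZ_sq

/-! ### The two reductions are independent on the Hecke group -/

/-- The product, inside the Hecke group, of its principal congruence subgroups of levels
`μ` and `ν`. -/
def kerSup (μ ν : Zlam) : Subgroup heckeZ :=
  (princ μ).subgroupOf heckeZ ⊔ (princ ν).subgroupOf heckeZ

instance (μ ν : Zlam) : (kerSup μ ν).Normal := by
  unfold kerSup; infer_instance

/-- `T` as an element of the Hecke group. -/
noncomputable def Th : heckeZ := ⟨Tz, Subgroup.subset_closure (by simp)⟩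

/-- `S` as an element of the Hecke group. -/
noncomputable def Sh : heckeZ := ⟨Sz, Subgroup.subset_closure (by simp)⟩

lemma Tz_mem_kerSup {μ ν : Zlam} {k n : ℤ} (hk : μ ∣ (k : Zlam)) (hn : ν ∣ (n : Zlam))
    (h : IsCoprime k n) : Th ∈ kerSup μ ν := by
  obtain ⟨u, v, huv⟩ := h
  have : Th = Th ^ (u * k) * Th ^ (v * n) := by rw [← _root_.zpow_add, huv, zpow_one]
  rw [this]
  refine Subgroup.mul_mem_sup ?_ ?_ <;> rw [Subgroup.mem_subgroupOf]
  · exact Tz_zpow_mem_princ (by push_cast; exact hk.mul_left _)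
  · exact Tz_zpow_mem_princ (by push_cast; exact hn.mul_left _)

/-- Modulo a normal subgroup containing `T`, the relations `S² = -1 = (S T)⁵` become
`S² = S⁵`, and `S⁴ = 1`, which force `S = 1`. -/
lemma kerSup_eq_top {μ ν : Zlam} (h : Th ∈ kerSup μ ν) : kerSup μ ν = ⊤ := by
  have hT : (Th : heckeZ ⧸ kerSup μ ν) = 1 := (QuotientGroup.eq_one_iff _).2 h
  have r1 : (Sh * Th) ^ 5 = Sh ^ 2 :=
    Subtype.ext (Sz_mul_Tz_pow_five.trans Sz_sq.symm)
  have r2 : Sh ^ 4 = 1 := Subtype.ext (by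
    change Sz ^ 4 = 1
    rw [show 4 = 2 * 2 from rfl, pow_mul, Sz_sq]; simp)
  have q1 := congrArg (QuotientGroup.mk' (kerSup μ ν)) r1
  have q2 := congrArg (QuotientGroup.mk' (kerSup μ ν)) r2
  simp only [map_pow, map_mul, map_one, QuotientGroup.mk'_apply, hT, mul_one] at q1 q2
  have hS : Sh ∈ kerSup μ ν := by
    rw [← QuotientGroup.eq_one_iff]
    rw [pow_succ, q2, one_mul] at q1
    simpa [pow_two] using q1
  have hle : heckeZ ≤ (kerSup μ ν).map heckeZ.subtype := by
    refine (Subgroup.closure_le _).2 ?_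
    rintro x (rfl | rfl)
    · exact ⟨Th, h, rfl⟩
    · exact ⟨Sh, hS, rfl⟩
  rw [eq_top_iff]
  rintro x -
  obtain ⟨y, hy, hyx⟩ := hle x.2
  rwa [← Subtype.ext hyx]

/-- Every element of the Hecke group is a product of elements congruent to `1` modulo `3^m`
and modulo `ν` respectively. -/
lemma exists_factorization {ν : Zlam} (hco : CoprimeZ 3 ν) (m : ℕ) {A : SL2Z}
    (hA : A ∈ heckeZ) :
    ∃ C ∈ heckeZ, ∃ B ∈ heckeZ, C ∈ princ (3 ^ m) ∧ B ∈ princ ν ∧ C * B = A := by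
  obtain ⟨n, hn, hcop⟩ := exists_int_multiple ν hco
  have h : (⟨A, hA⟩ : heckeZ) ∈ kerSup (3 ^ m) ν := by
    rw [kerSup_eq_top (Tz_mem_kerSup (k := 3 ^ m) (by push_cast; exact dvd_rfl) hn
      hcop.pow_left)]
    trivial
  obtain ⟨C, hC, B, hB, hCB⟩ := Subgroup.mem_sup_of_normal_left.1 h
  exact ⟨C, C.2, B, B.2, hC, hB, congrArg Subtype.val hCB⟩

lemma isCoprime_three_pow {ν : Zlam} (hco : CoprimeZ 3 ν) (m : ℕ) :
    IsCoprime ((3 : Zlam) ^ m) ν := by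
  obtain ⟨n, hn, hcop⟩ := exists_int_multiple ν hco
  have h := hcop.map (Int.castRingHom Zlam)
  refine (IsCoprime.of_isCoprime_of_dvd_right ?_ hn).pow_left
  simpa using h

/-! ### Comparison with the subgroups of `PSL(2, ℝ)` -/

lemma toReal_mem_SL0 {ν : Zlam} {A : SL2Z} : toReal A ∈ SL0 (ν : ℝ) ↔ ν ∣ A.1 1 0 := by
  constructor
  · rintro ⟨-, k, hk, h⟩
    exact ⟨⟨k, hk⟩, Subtype.ext h⟩
  · rintro ⟨k, h⟩
    exact ⟨fun i j => (A.1 i j).2, k, k.2, by rw [toReal_apply, h]; rfl⟩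

lemma center_le_SL0 (τ : ℝ) : Subgroup.center SL2R ≤ SL0 τ := by
  intro z hz
  obtain ⟨r, hr, hz⟩ := Matrix.SpecialLinearGroup.mem_center_iff.1 hz
  have hr' : r = 1 ∨ r = -1 := by
    rw [Fintype.card_fin] at hr
    simpa using hr
  have hrZ : r ∈ Zlam := by
    rcases hr' with rfl | rfl
    · exact Zlam.one_mem
    · exact Zlam.neg_mem Zlam.one_mem
  refine ⟨fun i j => ?_, 0, Zlam.zero_mem, ?_⟩
  · rw [← hz]
    fin_cases i <;> fin_cases j <;> simp [hrZ, Zlam.zero_mem]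
  · rw [← hz]; simp

lemma toPSL_mem_map_SL0 {τ : ℝ} {A : SL2R} : toPSL A ∈ (SL0 τ).map toPSL ↔ A ∈ SL0 τ := by
  refine ⟨?_, fun h => ⟨A, h, rfl⟩⟩
  rintro ⟨X, hX, h⟩
  have hz : X⁻¹ * A ∈ SL0 τ := center_le_SL0 τ (QuotientGroup.eq.1 h)
  simpa using mul_mem hX hz

lemma mem_G0_iff {ν : Zlam} {A : SL2Z} (hA : A ∈ heckeZ) :
    toPSL (toReal A) ∈ G0 (ν : ℝ) ↔ ν ∣ A.1 1 0 := by
  rw [G0, Subgroup.mem_inf, toPSL_mem_map_SL0, toReal_mem_SL0, and_iff_right]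
  rw [G5_eq_map]
  exact ⟨A, hA, rfl⟩

lemma toPSL_mem_Gp {ν : Zlam} {B : SL2Z} (hB : B ∈ heckeZ) (h : B ∈ princ ν) :
    toPSL (toReal B) ∈ Gp (ν : ℝ) := by
  refine ⟨by rw [G5_eq_map]; exact ⟨B, hB, rfl⟩, toReal B, rfl, fun i j => (B.1 i j).2,
    Or.inl fun i j => ?_⟩
  obtain ⟨k, hk⟩ := mem_princ.1 h i j
  refine ⟨k, k.2, ?_⟩
  have := congrArg (Subtype.val : Zlam → ℝ) hk
  rw [toReal_apply]
  fin_cases i <;> fin_cases j <;> simpa using this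

lemma Gp_subset_G0 (ν : Zlam) : Gp (ν : ℝ) ⊆ G0 (ν : ℝ) := by
  rintro g ⟨hg, A, rfl, hA, h | h⟩
  · obtain ⟨k, hk, h⟩ := h 1 0
    exact ⟨hg, A, ⟨hA, k, hk, by simpa using h⟩, rfl⟩
  · obtain ⟨k, hk, h⟩ := h 1 0
    exact ⟨hg, A, ⟨hA, k, hk, by simpa using h⟩, rfl⟩

lemma G0_mul_le (μ ν : Zlam) : G0 ((μ : ℝ) * (ν : ℝ)) ≤ G0 (ν : ℝ) := by
  rintro g ⟨hg, A, ⟨hA, k, hk, h⟩, rfl⟩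
  exact ⟨hg, A, ⟨hA, μ * k, Zlam.mul_mem μ.2 hk, by rw [h]; ring⟩, rfl⟩

/-- The subgroup generated by `G₀(3^m ν)` and the principal congruence subgroup `G(ν)`
equals `G₀(ν)`, provided `gcd(3, ν)` is a unit. -/
theorem closure_G0_union_Gp (ν : Zlam) (hν0 : ν ≠ 0) (hco : CoprimeZ 3 ν) (m : ℕ) :
    Subgroup.closure ((G0 ((3 : ℝ) ^ m * (ν : ℝ)) : Set PSL2R) ∪ Gp (ν : ℝ)) =
      G0 (ν : ℝ) := by
  have h3 : ((3 : ℝ) ^ m * (ν : ℝ)) = (((3 : Zlam) ^ m : Zlam) : ℝ) * (ν : ℝ) := by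
    push_cast; rfl
  apply le_antisymm
  · rw [Subgroup.closure_le]
    refine Set.union_subset ?_ (Gp_subset_G0 ν)
    rw [h3]
    exact G0_mul_le _ ν
  · intro g hg
    have hg5 : g ∈ G5 := hg.1
    rw [G5_eq_map] at hg5
    obtain ⟨A, hA, rfl⟩ := hg5
    have hdvd : ν ∣ A.1 1 0 := (mem_G0_iff hA).1 hg
    obtain ⟨C, hC, B, hB, hCm, hBν, rfl⟩ := exists_factorization hco m hA
    have hCν : ν ∣ C.1 1 0 := by
      rw [← mem_G0_iff hC]
      have hBG := Gp_subset_G0 ν (toPSL_mem_Gp hB hBν)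
      exact ((G0 (ν : ℝ)).mul_mem_cancel_right hBG).1 (by simpa using hg)
    have hC3 : (3 : Zlam) ^ m ∣ C.1 1 0 := by simpa using mem_princ.1 hCm 1 0
    have hCG : toPSL (toReal C) ∈ G0 ((3 : ℝ) ^ m * (ν : ℝ)) := by
      rw [h3, ← Subring.coe_mul, mem_G0_iff hC]
      exact (isCoprime_three_pow hco m).mul_dvd hC3 hCν
    rw [MonoidHom.comp_apply, map_mul, map_mul]
    exact mul_mem (Subgroup.subset_closure (Or.inl hCG))
      (Subgroup.subset_closure (Or.inr (toPSL_mem_Gp hB hBν)))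
end

section
/- Let an element of G_0(2) be represented by a matrix [[a, b],[2c, d]] with a, b, c, d ∈ Z[λ]. Then a + d and a − d are divisible by 2 in Z[λ], and a² − 1 is divisible by 4 in Z[λ]. -/
/-!
Modulo `2`, the group `G₅` preserves the quadratic form `x² + λxy + y²`: both generators do (its image
in `SL₂(𝔽₄)` is dihedral of order `10`, the orthogonal group of this anisotropic form). Hence the
first column `(x, y)` of every matrix representing an element of `G₅` satisfies
`x² + λxy + y² ≡ 1 (mod 2)` (`heckeCol_of_mem_G5`); signs do not matter.

For a first column `(a, 2c)` this reads `a² ≡ 1 (mod 2)`. Since `ℤ[λ]/2` is the field with four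
elements, `a⁴ ≡ a (mod 2)` (`two_dvd_pow_four_sub`), so `a ≡ a⁴ ≡ 1 (mod 2)`. The determinant then
gives `d ≡ 1 (mod 2)`, and `a² - 1 = (a - 1)(a + 1)` is a product of two multiples of `2`.
-/

open Matrix

/-- Frobenius on `ℤ[λ]/2 ≅ 𝔽₄`: every element satisfies `x⁴ ≡ x (mod 2)`. -/
lemma two_dvd_pow_four_sub (x : Zlam) : (2 : Zlam) ∣ x ^ 4 - x := by
  obtain ⟨x, hx⟩ := x
  change x ∈ Subring.closure {lam} at hx
  induction hx using Subring.closure_induction with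
  | mem x hx =>
    obtain rfl : x = lam := hx
    change (2 : Zlam) ∣ lamZ ^ 4 - lamZ
    exact ⟨lamZ + 1, by linear_combination (lamZ ^ 2 + lamZ + 2) * lamZ_sq⟩
  | zero => exact ⟨0, Subtype.ext (by simp)⟩
  | one => exact ⟨0, Subtype.ext (by simp)⟩
  | add x y hx hy ihx ihy =>
    obtain ⟨k, hk⟩ := ihx
    obtain ⟨l, hl⟩ := ihy
    set X : Zlam := ⟨x, hx⟩
    set Y : Zlam := ⟨y, hy⟩
    change (2 : Zlam) ∣ (X + Y) ^ 4 - (X + Y)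
    exact ⟨k + l + 2 * X ^ 3 * Y + 3 * X ^ 2 * Y ^ 2 + 2 * X * Y ^ 3,
      by linear_combination hk + hl⟩
  | neg x hx ih =>
    obtain ⟨k, hk⟩ := ih
    set X : Zlam := ⟨x, hx⟩
    change (2 : Zlam) ∣ (-X) ^ 4 - (-X)
    exact ⟨k + X, by linear_combination hk⟩
  | mul x y hx hy ihx ihy =>
    obtain ⟨k, hk⟩ := ihx
    obtain ⟨l, hl⟩ := ihy
    set X : Zlam := ⟨x, hx⟩
    set Y : Zlam := ⟨y, hy⟩
    change (2 : Zlam) ∣ (X * Y) ^ 4 - X * Y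
    exact ⟨k * Y ^ 4 + X * l, by linear_combination Y ^ 4 * hk + X * hl⟩

/-- The first column `(x, y)` of `A` lies in `ℤ[λ]²` and satisfies
`x² + λxy + y² ≡ 1 (mod 2)`. -/
def HeckeCol (A : SL2R) : Prop :=
  ∃ x y : Zlam, A.1 0 0 = x ∧ A.1 1 0 = y ∧ (2 : Zlam) ∣ x ^ 2 + lamZ * x * y + y ^ 2 - 1

lemma mul_col_zero (g B : SL2R) (i : Fin 2) :
    (g * B).1 i 0 = g.1 i 0 * B.1 0 0 + g.1 i 1 * B.1 1 0 := by
  simp [Matrix.mul_apply, Fin.sum_univ_two]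

lemma heckeCol_of_mem_closure {A : SL2R} (hA : A ∈ Subgroup.closure {Tgen, Sgen}) :
    HeckeCol A := by
  induction hA using Subgroup.closure_induction_left with
  | one => exact ⟨1, 0, by simp, by simp, 0, by ring⟩
  | mul_left g hg B _ ih =>
    obtain ⟨x, y, hx, hy, k, hk⟩ := ih
    rcases hg with rfl | rfl
    · refine ⟨x + lamZ * y, y, ?_, ?_, k + lamZ * x * y + lamZ ^ 2 * y ^ 2,
        by linear_combination hk⟩ <;>
      rw [mul_col_zero] <;> simp [Tgen, hx, hy, lamZ]
    · refine ⟨-y, x, ?_, ?_, k - lamZ * x * y, by linear_combination hk⟩ <;>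
      rw [mul_col_zero] <;> simp [Sgen, hx, hy]
  | inv_mul_cancel g hg B _ ih =>
    obtain ⟨x, y, hx, hy, k, hk⟩ := ih
    rcases hg with rfl | rfl
    · refine ⟨x - lamZ * y, y, ?_, ?_, k - lamZ * x * y, by linear_combination hk⟩ <;>
      rw [mul_col_zero, Matrix.SpecialLinearGroup.SL2_inv_expl] <;>
      simp [Tgen, hx, hy, lamZ, sub_eq_add_neg]
    · refine ⟨y, -x, ?_, ?_, k - lamZ * x * y, by linear_combination hk⟩ <;>
      rw [mul_col_zero, Matrix.SpecialLinearGroup.SL2_inv_expl] <;>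
      simp [Sgen, hx, hy]

/-- The condition `HeckeCol` is insensitive to the sign of the matrix, so it passes from the
subgroup of `SL₂(ℝ)` generated by the two matrices to all representatives of elements of `G₅`. -/
lemma heckeCol_of_mem_G5 {A : SL2R} (hA : toPSL A ∈ G5) : HeckeCol A := by
  have hmap : G5 = (Subgroup.closure {Tgen, Sgen}).map toPSL := by
    rw [G5, MonoidHom.map_closure, Set.image_pair]
  rw [hmap] at hA
  obtain ⟨B, hB, hBA⟩ := hA
  obtain ⟨r, hr, hrz⟩ :=
    Matrix.SpecialLinearGroup.mem_center_iff.mp (QuotientGroup.eq.mp hBA)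
  obtain ⟨x, y, hx, hy, hxy⟩ := heckeCol_of_mem_closure hB
  have hmul : A.1 = B.1 * Matrix.scalar (Fin 2) r := by
    rw [hrz, ← Matrix.SpecialLinearGroup.coe_mul, mul_inv_cancel_left]
  have h0 : A.1 0 0 = B.1 0 0 * r := by
    simp [hmul, Matrix.mul_apply, Fin.sum_univ_two]
  have h1 : A.1 1 0 = B.1 1 0 * r := by
    simp [hmul, Matrix.mul_apply, Fin.sum_univ_two]
  have hr2 : r ^ 2 = 1 := by simpa using hr
  rcases sq_eq_sq_iff_eq_or_eq_neg.mp (hr2.trans (one_pow 2).symm) with rfl | rfl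
  · exact ⟨x, y, by simp [h0, hx], by simp [h1, hy], hxy⟩
  · exact ⟨-x, -y, by simp [h0, hx], by simp [h1, hy], by convert hxy using 1; ring⟩

/-- If an element of `G₀(2)` is represented by `[[a, b], [2c, d]]` with entries in `ℤ[λ]`,
then `2 ∣ a + d`, `2 ∣ a - d` and `4 ∣ a² - 1`. -/
theorem trace_even_of_mem_G0_two (a b c d : Zlam) (A : SL2R)
    (hA : A.1 = !![(a : ℝ), (b : ℝ); 2 * (c : ℝ), (d : ℝ)])
    (hG : toPSL A ∈ G0 (2 : ℝ)) :
    (2 : Zlam) ∣ (a + d) ∧ (2 : Zlam) ∣ (a - d) ∧ (4 : Zlam) ∣ (a ^ 2 - 1) := by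
  obtain ⟨x, y, hx, hy, k, hk⟩ := heckeCol_of_mem_G5 hG.1
  obtain rfl : a = x := Subtype.ext (by simpa [hA] using hx)
  obtain rfl : 2 * c = y := Subtype.ext ((by simp [hA] : A.1 1 0 = 2 * (c : ℝ)).symm.trans hy)
  have hdet : a * d - b * (2 * c) = 1 := by
    have h := A.2
    rw [hA, Matrix.det_fin_two_of] at h
    exact Subtype.ext h
  obtain ⟨l, hl⟩ := two_dvd_pow_four_sub a
  obtain ⟨m, hm⟩ : (2 : Zlam) ∣ a ^ 2 - 1 :=
    ⟨k - lamZ * a * c - 2 * c ^ 2, by linear_combination hk⟩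
  -- `a - 1 = (a² - 1)(a² + 1) - (a⁴ - a)`
  obtain ⟨n, hn⟩ : (2 : Zlam) ∣ a - 1 :=
    ⟨m * (a ^ 2 + 1) - l, by linear_combination (a ^ 2 + 1) * hm - hl⟩
  -- `d - 1 = (ad - 1) - (a - 1)d`
  obtain ⟨q, hq⟩ : (2 : Zlam) ∣ d - 1 :=
    ⟨b * c - n * d, by linear_combination hdet - d * hn⟩
  refine ⟨⟨n + q + 1, ?_⟩, ⟨n - q, ?_⟩, ⟨n * (n + 1), ?_⟩⟩
  · linear_combination hn + hq
  · linear_combination hn - hq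
  · linear_combination (a + 1 + 2 * n) * hn
end

section
/- Let x, u, v be nonzero elements of Z[λ] with gcd(x, u) a unit, and suppose u − v = mx for some rational integer m ∈ ℤ. Then for every nonnegative integer e, the fraction (xλ^e)/(uλ^{e+1}) is in reduced form if and only if (xλ^e)/(vλ^{e+1}) is in reduced form; that is, the reduced factors of x/(uλ) and x/(vλ) coincide. -/
/-! The Hecke group contains `S T⁻ᵏ S⁻¹ = [[1, 0], [kλ, 1]]` for every rational integer `k`.
Multiplying a matrix of `G₅` on the left by this element replaces a column `(a, b)` by
`(a, b + kλa)`, so reducedness of `a/b` and of `a/(b + kλa)` are equivalent. For `a = xλ^e`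
and `b = uλ^(e+1)`, the choice `k = -m` gives `b + kλa = (u - mx)λ^(e+1) = vλ^(e+1)`. -/

open Matrix

theorem Tgen_zpow (k : ℤ) : (Tgen ^ k).1 = !![1, k * lam; 0, 1] := by
  induction k using Int.induction_on with
  | zero => simp [Matrix.one_fin_two]
  | succ n ih =>
    rw [_root_.zpow_add_one, Matrix.SpecialLinearGroup.coe_mul, ih]
    simp [Tgen]; ring
  | pred n ih =>
    rw [_root_.zpow_sub_one, Matrix.SpecialLinearGroup.coe_mul, ih,
      Matrix.SpecialLinearGroup.coe_inv]
    simp [Tgen, Matrix.adjugate_fin_two_of]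
    ring

/-- The lower triangular matrices `[[1, 0], [kλ, 1]]`, `k ∈ ℤ`, represent elements of `G₅`. -/
theorem exists_lower (k : ℤ) :
    ∃ L : SL2R, toPSL L ∈ G5 ∧ L.1 = !![1, 0; k * lam, 1] := by
  have hT : toPSL Tgen ∈ G5 := Subgroup.subset_closure (by simp)
  have hS : toPSL Sgen ∈ G5 := Subgroup.subset_closure (by simp)
  refine ⟨Sgen * Tgen ^ (-k) * Sgen⁻¹, ?_, ?_⟩
  · rw [map_mul, map_mul, map_zpow, map_inv]
    exact G5.mul_mem (G5.mul_mem hS (G5.zpow_mem hT _)) (G5.inv_mem hS)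
  · rw [Matrix.SpecialLinearGroup.coe_mul, Matrix.SpecialLinearGroup.coe_mul, Tgen_zpow,
      Matrix.SpecialLinearGroup.coe_inv]
    simp [Sgen, Matrix.adjugate_fin_two_of, Matrix.one_fin_two]

theorem IsReducedForm.shear {a b : ℝ} (h : IsReducedForm a b) (k : ℤ) :
    IsReducedForm a (b + k * lam * a) := by
  obtain ⟨A, hA, hcol⟩ := h
  obtain ⟨L, hL, hLval⟩ := exists_lower k
  refine ⟨L * A, by rw [map_mul]; exact G5.mul_mem hL hA, ?_⟩
  rw [Matrix.SpecialLinearGroup.coe_mul, hLval]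
  rcases hcol with ⟨rfl, rfl⟩ | ⟨rfl, rfl⟩
  · left; simp [Matrix.mul_apply, Fin.sum_univ_two]; ring
  · right; simp [Matrix.mul_apply, Fin.sum_univ_two]; ring

/-- If `gcd(x, u)` is a unit and `u - v = m x` for some rational integer `m`, then the
reduced factors of `x/(uλ)` and `x/(vλ)` coincide. -/
theorem reduced_factor_congr (x u v : Zlam) (hx : x ≠ 0) (hu : u ≠ 0) (hv : v ≠ 0)
    (hco : CoprimeZ x u) (m : ℤ) (hm : u - v = (m : Zlam) * x) :
    ∀ e : ℕ, (IsReducedForm ((x : ℝ) * lam ^ e) ((u : ℝ) * lam ^ (e + 1)) ↔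
      IsReducedForm ((x : ℝ) * lam ^ e) ((v : ℝ) * lam ^ (e + 1))) := by
  intro e
  have hR : (u : ℝ) - v = m * x := by exact_mod_cast congrArg (Subtype.val) hm
  constructor
  · intro h
    convert h.shear (-m) using 1
    push_cast
    linear_combination -lam ^ (e + 1) * hR
  · intro h
    convert h.shear m using 1
    linear_combination lam ^ (e + 1) * hR
end

section
/- Let n ∈ ℤ be a nonzero rational integer. If n ≡ 1 or 8 (mod 9), then the fraction (9λ³)/(nλ⁴) is in reduced form (so the reduced factor of 9/(nλ) is 3); if n ≡ 2, 4, 5 or 7 (mod 9), then the fraction (9λ⁹)/(nλ¹⁰) is in reduced form (so the reduced factor of 9/(nλ) is 9). -/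
/-!
The set of vectors `(x, y)` in reduced form is stable under the two generators of `G₅`, hence
under `(x, y) ↦ (x + kλy, y)`, `(x, y) ↦ (-y, x)` and, conjugating the first by the second,
`(x, y) ↦ (x, y + kλx)` for `k ∈ ℤ`. Applied to `(9λᵉ, nλᵉ⁺¹)`, the last map replaces `n` by
`n + 9k`, so that only the residue of `n` modulo `9` matters (`isReducedForm_nine_shift`). For each
of the six remaining residues, taken in `{±1, ±2, ±4}`, Rosen's continued fraction algorithm
(subtract the nearest multiple of `λy` from `x`, then apply the inversion) takes the vector to
`(±1, 0)`. Its partial quotients are the lists given in the proof, and the computation is done in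
the integral basis `1, λ` of `ℤ[λ]`, using `λ² = λ + 1` (`isReducedForm_of_rosen`).
-/

open Matrix

lemma IsReducedForm.smul {x y : ℝ} (h : IsReducedForm x y) (M : SL2R) (hM : toPSL M ∈ G5) :
    IsReducedForm (M.1 0 0 * x + M.1 0 1 * y) (M.1 1 0 * x + M.1 1 1 * y) := by
  obtain ⟨A, hA, h⟩ := h
  refine ⟨M * A, by rw [map_mul]; exact G5.mul_mem hM hA, ?_⟩
  rcases h with ⟨rfl, rfl⟩ | ⟨rfl, rfl⟩
  · left; simp [Matrix.mul_apply, Fin.sum_univ_two]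
  · right; simp [Matrix.mul_apply, Fin.sum_univ_two]

lemma isReducedForm_one_zero : IsReducedForm 1 0 :=
  ⟨1, by rw [map_one]; exact G5.one_mem, by simp⟩

lemma IsReducedForm.inversion {x y : ℝ} (h : IsReducedForm x y) : IsReducedForm (-y) x := by
  simpa [Sgen] using h.smul Sgen toPSL_Sgen_mem

lemma IsReducedForm.neg {x y : ℝ} (h : IsReducedForm x y) : IsReducedForm (-x) (-y) :=
  h.inversion.inversion

lemma IsReducedForm.translate {x y : ℝ} (h : IsReducedForm x y) (k : ℤ) :
    IsReducedForm (x + k * lam * y) y := by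
  induction k using Int.induction_on with
  | zero => simpa using h
  | succ i ih =>
    have := ih.smul Tgen toPSL_Tgen_mem
    simp only [Tgen] at this
    convert this using 1 <;> simp <;> ring
  | pred i ih =>
    have := ih.smul Tgen⁻¹ (by rw [map_inv]; exact G5.inv_mem toPSL_Tgen_mem)
    rw [Matrix.SpecialLinearGroup.SL2_inv_expl] at this
    simp only [Tgen] at this
    convert this using 1 <;> simp <;> ring

lemma IsReducedForm.translate_snd {x y : ℝ} (h : IsReducedForm x y) (k : ℤ) :
    IsReducedForm x (y + k * lam * x) := by
  convert (h.inversion.translate (-k)).inversion.neg using 1 <;> push_cast <;> ring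

/-- The vector `(a + bλ, c + dλ)` is in reduced form. -/
def RedZ (a b c d : ℤ) : Prop := IsReducedForm (a + b * lam) (c + d * lam)

/-- The result of running the continued fraction algorithm with partial quotients `ks` on the vector
`(a + bλ, c + dλ)`, given by its integer coordinates: a partial quotient `k` takes `(x, y)` to
`(-y, x - kλy)`, where `λ(c + dλ) = d + (c + d)λ`. -/
def rosen : List ℤ → ℤ → ℤ → ℤ → ℤ → ℤ × ℤ × ℤ × ℤ
  | [], a, b, c, d => (a, b, c, d)
  | k :: ks, a, b, c, d => rosen ks (-c) (-d) (a - k * d) (b - k * (c + d))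

/-- A vector which some sequence of partial quotients takes to `(±1, 0)` is in reduced form. -/
lemma isReducedForm_of_rosen (ks : List ℤ) (a b c d : ℤ)
    (h : rosen ks a b c d = (1, 0, 0, 0) ∨ rosen ks a b c d = (-1, 0, 0, 0)) :
    RedZ a b c d := by
  induction ks generalizing a b c d with
  | nil =>
    simp only [rosen, Prod.mk.injEq] at h
    rcases h with ⟨rfl, rfl, rfl, rfl⟩ | ⟨rfl, rfl, rfl, rfl⟩
    · simpa [RedZ] using isReducedForm_one_zero
    · simpa [RedZ] using isReducedForm_one_zero.neg
  | cons k ks ih =>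
    have h1 := ((ih _ _ _ _ h).inversion.neg).translate k
    unfold RedZ
    convert h1 using 1
    · push_cast
      linear_combination (-(k : ℝ) * d) * lam_sq
    · push_cast
      ring

/-- Whether `9λᵉ/(nλᵉ⁺¹)` is in reduced form depends only on `n` modulo `9`. -/
lemma isReducedForm_nine_shift (e : ℕ) {m n : ℤ} (hmn : (9 : ℤ) ∣ n - m)
    (h : IsReducedForm (9 * lam ^ e) ((m : ℝ) * lam ^ (e + 1))) :
    IsReducedForm (9 * lam ^ e) ((n : ℝ) * lam ^ (e + 1)) := by
  obtain ⟨k, hk⟩ := hmn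
  obtain rfl : n = m + 9 * k := by linarith
  convert h.translate_snd k using 1
  push_cast
  ring

lemma lam_pow_three : lam ^ 3 = 1 + 2 * lam := by
  linear_combination (lam + 1) * lam_sq

lemma lam_pow_four : lam ^ 4 = 2 + 3 * lam := by
  linear_combination lam * lam_pow_three + 2 * lam_sq

lemma lam_pow_nine : lam ^ 9 = 21 + 34 * lam := by
  have h : lam ^ 9 = (1 + 2 * lam) ^ 3 := by rw [← lam_pow_three]; ring
  linear_combination h + (8 * lam + 20) * lam_sq

lemma lam_pow_ten : lam ^ 10 = 34 + 55 * lam := by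
  linear_combination lam * lam_pow_nine + 34 * lam_sq

lemma isReducedForm_three (ks : List ℤ) (m : ℤ)
    (h : rosen ks 9 18 (2 * m) (3 * m) = (1, 0, 0, 0) ∨
      rosen ks 9 18 (2 * m) (3 * m) = (-1, 0, 0, 0)) :
    IsReducedForm (9 * lam ^ 3) ((m : ℝ) * lam ^ 4) := by
  have := isReducedForm_of_rosen ks _ _ _ _ h
  unfold RedZ at this
  rw [lam_pow_three, lam_pow_four]
  convert this using 1 <;> push_cast <;> ring

lemma isReducedForm_nine (ks : List ℤ) (m : ℤ)
    (h : rosen ks 189 306 (34 * m) (55 * m) = (1, 0, 0, 0) ∨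
      rosen ks 189 306 (34 * m) (55 * m) = (-1, 0, 0, 0)) :
    IsReducedForm (9 * lam ^ 9) ((m : ℝ) * lam ^ 10) := by
  have := isReducedForm_of_rosen ks _ _ _ _ h
  unfold RedZ at this
  rw [lam_pow_nine, lam_pow_ten]
  convert this using 1 <;> push_cast <;> ring

/-- For nonzero `n ∈ ℤ`: if `n ≡ 1, 8 (mod 9)` then `(9λ³)/(nλ⁴)` is in reduced form; if
`n ≡ 2, 4, 5, 7 (mod 9)` then `(9λ⁹)/(nλ¹⁰)` is in reduced form. -/
theorem reduced_form_nine (n : ℤ) (hn : n ≠ 0) :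
    ((n % 9 = 1 ∨ n % 9 = 8) → IsReducedForm (9 * lam ^ 3) ((n : ℝ) * lam ^ 4)) ∧
    ((n % 9 = 2 ∨ n % 9 = 4 ∨ n % 9 = 5 ∨ n % 9 = 7) →
      IsReducedForm (9 * lam ^ 9) ((n : ℝ) * lam ^ 10)) := by
  refine ⟨?_, ?_⟩
  · rintro (h | h)
    · exact isReducedForm_nine_shift 3 (n := n) (m := 1) (by omega)
        (isReducedForm_three [3, -1, -3] 1 (by decide))
    · exact isReducedForm_nine_shift 3 (n := n) (m := -1) (by omega)
        (isReducedForm_three [-3, 1, 3] (-1) (by decide))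
  · rintro (h | h | h | h)
    · exact isReducedForm_nine_shift 9 (n := n) (m := 2) (by omega)
        (isReducedForm_nine [2, 1, -1, 6, 3, 1] 2 (by decide))
    · exact isReducedForm_nine_shift 9 (n := n) (m := 4) (by omega)
        (isReducedForm_nine [1, 3, 1, -1, 4, -2, -1] 4 (by decide))
    · exact isReducedForm_nine_shift 9 (n := n) (m := -4) (by omega)
        (isReducedForm_nine [-1, -3, -1, 1, -4, 2, 1] (-4) (by decide))
    · exact isReducedForm_nine_shift 9 (n := n) (m := -2) (by omega)
        (isReducedForm_nine [-2, -1, 1, -6, -3, -1] (-2) (by decide))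
end
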